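/- arXiv:2407.17043 — 2 statements merged into one kernel-verified Lean document; each statement's English description precedes it below -/
import Mathlib

section
/- Let N ∈ ℕ, ω ∈ ℝ, and let a₀,…,a_N and b₀,…,b_N be complex numbers. Then for every t ∈ ℝ, Re{ ∑_{m=0}^{2N} ∑_{j=max(m−N,0)}^{min(m,N)} conj(a_j) b_{m−j} e^{ι (m−2j) ω t} } = Re{ ∑_{j=0}^{N} conj(a_j) b_j + ∑_{m=1}^{N} e^{ι m ω t} ∑_{l=0}^{N−m} ( conj(a_l) b_{l+m} + a_{l+m} conj(b_l) ) }. -/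
open Finset Complex

/-!
Absorbing the phases into the coefficients, `u j = a j * exp (I * j * θ)` and
`v k = b k * exp (I * k * θ)` with `θ = ω * t`, turns both sides into rearrangements of
`∑ j ≤ N, ∑ k ≤ N, Re (conj (u j) * v k)`. Grouping by `m = j + k` gives the left-hand side.
Folding the square along its diagonal and grouping by `m = k - j` gives the right-hand side, because
`conj (u k) * v j` and `u k * conj (v j)` have the same real part.
-/

section Rearrangement

variable {M : Type*} [AddCommMonoid M]

lemma sum_range_sum_Icc_sub_eq_sum_rectangle (J K : ℕ) (f : ℕ → ℕ → M) :
    ∑ m ∈ range (J + K + 1), ∑ j ∈ Icc (m - K) (min m J), f j (m - j) =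
      ∑ j ∈ range (J + 1), ∑ k ∈ range (K + 1), f j k := by
  rw [sum_sigma', sum_sigma']
  refine sum_nbij' (fun p ↦ ⟨p.2, p.1 - p.2⟩) (fun p ↦ ⟨p.1 + p.2, p.1⟩) ?_ ?_ ?_ ?_ ?_ <;>
    simp only [mem_sigma, mem_range, mem_Icc, Sigma.forall, Sigma.mk.injEq, heq_eq_eq,
      implies_true, and_true, true_and] <;>
    omega

lemma sum_Icc_sum_range_add_eq_sum_lt (N : ℕ) (f : ℕ → ℕ → M) :
    ∑ m ∈ Icc 1 N, ∑ l ∈ range (N - m + 1), f l (l + m) =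
      ∑ k ∈ range (N + 1), ∑ j ∈ range k, f j k := by
  rw [sum_sigma', sum_sigma']
  refine sum_nbij' (fun p ↦ ⟨p.2 + p.1, p.2⟩) (fun p ↦ ⟨p.1 - p.2, p.2⟩) ?_ ?_ ?_ ?_ ?_ <;>
    simp only [mem_sigma, mem_range, mem_Icc, Sigma.forall, Sigma.mk.injEq, heq_eq_eq,
      implies_true, and_true] <;>
    omega

lemma sum_square_eq_sum_diag_add_sum_lt (n : ℕ) (f : ℕ → ℕ → M) :
    ∑ j ∈ range n, ∑ k ∈ range n, f j k =
      ∑ j ∈ range n, f j j + ∑ k ∈ range n, ∑ j ∈ range k, (f j k + f k j) := by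
  induction n with
  | zero => simp
  | succ n ih =>
    simp only [sum_range_succ _ n, sum_add_distrib] at ih ⊢
    rw [ih]
    abel

lemma sum_range_sum_Icc_sub_eq_sum_diag_add (N : ℕ) (f : ℕ → ℕ → M) :
    ∑ m ∈ range (2 * N + 1), ∑ j ∈ Icc (m - N) (min m N), f j (m - j) =
      ∑ j ∈ range (N + 1), f j j +
        ∑ m ∈ Icc 1 N, ∑ l ∈ range (N - m + 1), (f l (l + m) + f (l + m) l) := by
  rw [two_mul, sum_range_sum_Icc_sub_eq_sum_rectangle, sum_square_eq_sum_diag_add_sum_lt,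
    sum_Icc_sum_range_add_eq_sum_lt N fun j k ↦ f j k + f k j]

end Rearrangement

lemma re_conj_mul_eq_re_mul_conj {𝕜 : Type*} [RCLike 𝕜] (z w : 𝕜) :
    RCLike.re (starRingEnd 𝕜 z * w) = RCLike.re (z * starRingEnd 𝕜 w) := by
  rw [← RCLike.conj_re, map_mul, RCLike.conj_conj]

lemma re_sum_conj_mul_eq_re_sum_diag_add {𝕜 : Type*} [RCLike 𝕜] (N : ℕ) (u v : ℕ → 𝕜) :
    RCLike.re (∑ m ∈ range (2 * N + 1), ∑ j ∈ Icc (m - N) (min m N),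
        starRingEnd 𝕜 (u j) * v (m - j)) =
      RCLike.re (∑ j ∈ range (N + 1), starRingEnd 𝕜 (u j) * v j +
        ∑ m ∈ Icc 1 N, ∑ l ∈ range (N - m + 1),
          (starRingEnd 𝕜 (u l) * v (l + m) + u (l + m) * starRingEnd 𝕜 (v l))) := by
  rw [sum_range_sum_Icc_sub_eq_sum_diag_add N fun j k ↦ starRingEnd 𝕜 (u j) * v k]
  simp only [map_add, map_sum, re_conj_mul_eq_re_mul_conj (u (_ + _)) (v _)]

/-- The `n`-th term `a n * exp (i n θ)` of the multiharmonic expansion with coefficients `a`,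
at the phase `θ` (which is `ω t` in the time-periodic setting). -/
noncomputable def harmonicTerm (a : ℕ → ℂ) (θ : ℝ) (n : ℕ) : ℂ :=
  a n * exp (I * n * θ)

lemma conj_harmonicTerm_mul_harmonicTerm (a b : ℕ → ℂ) (θ : ℝ) (j k : ℕ) :
    starRingEnd ℂ (harmonicTerm a θ j) * harmonicTerm b θ k =
      starRingEnd ℂ (a j) * b k * exp (I * (k - j) * θ) := by
  have exp_sub_phase : exp (I * (k - j) * θ) =
      exp (-I * j * θ) * exp (I * k * θ) := by
    rw [← exp_add]
    ring_nf
  simp only [harmonicTerm, map_mul, ← exp_conj, conj_I, conj_ofReal, map_natCast,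
    exp_sub_phase]
  ring

lemma conj_harmonicTerm_mul_harmonicTerm_self (a b : ℕ → ℂ) (θ : ℝ) (n : ℕ) :
    starRingEnd ℂ (harmonicTerm a θ n) * harmonicTerm b θ n = starRingEnd ℂ (a n) * b n := by
  simp [conj_harmonicTerm_mul_harmonicTerm]

lemma conj_harmonicTerm_mul_add_harmonicTerm_mul_conj (a b : ℕ → ℂ) (θ : ℝ) (l m : ℕ) :
    starRingEnd ℂ (harmonicTerm a θ l) * harmonicTerm b θ (l + m) +
        harmonicTerm a θ (l + m) * starRingEnd ℂ (harmonicTerm b θ l) =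
      exp (I * m * θ) *
        (starRingEnd ℂ (a l) * b (l + m) + a (l + m) * starRingEnd ℂ (b l)) := by
  rw [mul_comm (harmonicTerm a θ (l + m)), conj_harmonicTerm_mul_harmonicTerm,
    conj_harmonicTerm_mul_harmonicTerm, Nat.cast_add, add_sub_cancel_left]
  ring

/-- Index-rearrangement identity for the mixed conjugate terms in the
multiharmonic expansion:
`Re ∑_{m=0}^{2N} ∑_{j=max(m−N,0)}^{min(m,N)} conj(a_j) b_{m−j} e^{ι(m−2j)ωt}
 = Re ( ∑_{j=0}^N conj(a_j) b_j
   + ∑_{m=1}^N e^{ι m ω t} ∑_{l=0}^{N−m} (conj(a_l) b_{l+m} + a_{l+m} conj(b_l)) )`. -/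
theorem stmt_8
    (N : ℕ) (ω : ℝ) (a b : ℕ → ℂ) :
    ∀ t : ℝ,
      (∑ m ∈ range (2 * N + 1), ∑ j ∈ Finset.Icc (m - N) (min m N),
        (starRingEnd ℂ) (a j) * b (m - j) *
          Complex.exp (Complex.I * (((m : ℝ) - 2 * (j : ℝ)) : ℂ) * ω * t)).re =
      ((∑ j ∈ range (N + 1), (starRingEnd ℂ) (a j) * b j) +
        ∑ m ∈ Finset.Icc 1 N, Complex.exp (Complex.I * m * ω * t) *
          ∑ l ∈ range (N - m + 1),
            ((starRingEnd ℂ) (a l) * b (l + m) + a (l + m) * (starRingEnd ℂ) (b l))).re := by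
  intro t
  have left_summand (m j : ℕ) (hj : j ∈ Icc (m - N) (min m N)) :
      starRingEnd ℂ (a j) * b (m - j) *
          exp (I * (((m : ℝ) - 2 * (j : ℝ)) : ℂ) * ω * t) =
        starRingEnd ℂ (harmonicTerm a (ω * t) j) * harmonicTerm b (ω * t) (m - j) := by
    have hjm : j ≤ m := (mem_Icc.mp hj).2.trans (min_le_left m N)
    rw [conj_harmonicTerm_mul_harmonicTerm]
    push_cast [Nat.cast_sub hjm]
    ring_nf
  rw [sum_congr rfl fun m _ ↦ sum_congr rfl (left_summand m)]
  refine (re_sum_conj_mul_eq_re_sum_diag_add N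
    (harmonicTerm a (ω * t)) (harmonicTerm b (ω * t))).trans ?_
  simp only [conj_harmonicTerm_mul_add_harmonicTerm_mul_conj,
    conj_harmonicTerm_mul_harmonicTerm_self, ← mul_sum, ofReal_mul, ← mul_assoc,
    RCLike.re_eq_complex_re]
end

section
/- Let T > 0, ω = 2π/T, N ∈ ℕ, and let a₀,…,a_N and b₀,…,b_N be complex numbers. Define u(t) = Re(∑_{j=0}^{N} a_j e^{ι j ω t}) and v(t) = Re(∑_{j=0}^{N} b_j e^{ι j ω t}). Then for every integer m with 1 ≤ m ≤ N, (1/T) ∫₀^T u(t) v(t) e^{−ι m ω t} dt = (1/4) [ ∑_{j=0}^{m} a_j b_{m−j} + ∑_{l=0}^{N−m} ( conj(a_l) b_{l+m} + a_{l+m} conj(b_l) ) ]. -/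
open Finset Complex

/-!
Both factors are real parts of exponential sums on the circle `ℝ / Tℤ`. Expanding
`4 Re(A) Re(B) = AB + ĀB + B̄A + ĀB̄` gives sums of characters, whose Fourier coefficients are read
off from orthogonality: the frequencies are `j + k`, `k - j`, `j - k` and `-(j + k)`, and the last
family contributes nothing at a positive frequency.
-/

open AddCircle MeasureTheory
open scoped ComplexConjugate

section FourierCoeff

variable {T : ℝ}

theorem integrable_haarAddCircle [Fact (0 < T)] {E : Type*} [NormedAddCommGroup E]
    (f : C(AddCircle T, E)) : Integrable f haarAddCircle :=
  f.continuous.integrable_of_hasCompactSupport (.of_compactSpace f)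

theorem ofReal_re_mul_re (z w : ℂ) :
    ((z.re * w.re : ℝ) : ℂ) =
      1 / 4 * (z * w + conj z * w + conj w * z + conj z * conj w) := by
  rw [ofReal_mul, re_eq_add_conj, re_eq_add_conj]
  ring

theorem fourierCoeff_re_mul_re [Fact (0 < T)] (f g : C(AddCircle T, ℂ)) (n : ℤ) :
    fourierCoeff (fun x ↦ (((f x).re * (g x).re : ℝ) : ℂ)) n =
      1 / 4 * (fourierCoeff (f * g : C(AddCircle T, ℂ)) n
        + fourierCoeff (star f * g : C(AddCircle T, ℂ)) n
        + fourierCoeff (star g * f : C(AddCircle T, ℂ)) n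
        + fourierCoeff (star f * star g : C(AddCircle T, ℂ)) n) := by
  have hadd (h k : C(AddCircle T, ℂ)) :
      fourierCoeff (h + k : C(AddCircle T, ℂ)) n = fourierCoeff h n + fourierCoeff k n :=
    congrFun (fourierCoeff.add (integrable_haarAddCircle h) (integrable_haarAddCircle k)) n
  simp only [ofReal_re_mul_re, fourierCoeff.const_mul, ← hadd]
  rfl

theorem fourier_coe_eq_exp {ω : ℝ} (hω : ω = 2 * Real.pi / T) (n : ℤ) (t : ℝ) :
    fourier n (t : AddCircle T) = exp (I * n * ω * t) := by
  rw [fourier_coe_apply, hω]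
  push_cast
  ring_nf

theorem fourierCoeff_eq_integral_exp [Fact (0 < T)] {ω : ℝ} (hω : ω = 2 * Real.pi / T)
    (f : AddCircle T → ℂ) (n : ℤ) :
    fourierCoeff f n = 1 / (T : ℂ) * ∫ t in (0 : ℝ)..T, f t * exp (-I * n * ω * t) := by
  rw [fourierCoeff_eq_intervalIntegral f n 0, zero_add, real_smul]
  push_cast
  congr 2 with t
  rw [fourier_coe_eq_exp hω, smul_eq_mul, mul_comm]
  push_cast
  ring_nf

end FourierCoeff

section TrigSum

variable {T : ℝ} {ι κ : Type*}

/-- The trigonometric polynomial on `ℝ / Tℤ` with coefficients `c i` at the integer frequencies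
`p i`, for `i ∈ s`. Frequencies may repeat, so that products are again of this form, indexed by
pairs. -/
noncomputable def trigSum (s : Finset ι) (p : ι → ℤ) (c : ι → ℂ) : C(AddCircle T, ℂ) :=
  ∑ i ∈ s, c i • fourier (p i)

theorem trigSum_apply (s : Finset ι) (p : ι → ℤ) (c : ι → ℂ) (x : AddCircle T) :
    trigSum s p c x = ∑ i ∈ s, c i * fourier (p i) x := by
  simp only [trigSum, ContinuousMap.sum_apply, ContinuousMap.smul_apply, smul_eq_mul]

theorem trigSum_mul_trigSum (s : Finset ι) (p : ι → ℤ) (c : ι → ℂ)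
    (t : Finset κ) (q : κ → ℤ) (d : κ → ℂ) :
    (trigSum s p c * trigSum t q d : C(AddCircle T, ℂ)) =
      trigSum (s ×ˢ t) (fun x ↦ p x.1 + q x.2) (fun x ↦ c x.1 * d x.2) := by
  ext x
  simp only [ContinuousMap.mul_apply, trigSum_apply, sum_mul_sum, sum_product, fourier_add,
    mul_mul_mul_comm]

theorem star_trigSum (s : Finset ι) (p : ι → ℤ) (c : ι → ℂ) :
    star (trigSum s p c : C(AddCircle T, ℂ)) = trigSum s (fun i ↦ -p i) (fun i ↦ conj (c i)) := by
  ext x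
  simp only [ContinuousMap.star_apply, star_def, trigSum_apply, map_sum, map_mul, fourier_neg]

theorem fourierCoeff_trigSum [Fact (0 < T)] (s : Finset ι) (p : ι → ℤ) (c : ι → ℂ) (n : ℤ) :
    fourierCoeff (trigSum s p c : C(AddCircle T, ℂ)) n = ∑ i ∈ s with p i = n, c i := by
  rw [trigSum, ContinuousMap.coe_sum, fourierCoeff.sum _ _ fun i _ ↦ integrable_haarAddCircle _,
    Finset.sum_apply, sum_filter]
  refine sum_congr rfl fun i _ ↦ ?_
  rw [ContinuousMap.coe_smul, fourierCoeff.const_smul, fourierCoeff_fourier, Pi.single_apply]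
  simp only [smul_eq_mul, mul_ite, mul_one, mul_zero, eq_comm (a := n)]

end TrigSum

section HarmonicSum

variable {T : ℝ}

/-- The truncated harmonic expansion `∑ j ≤ N, a j * exp (2 * π * I * j * t / T)`, before taking
real parts, as a function on the circle `ℝ / Tℤ`. -/
noncomputable def harmonicSum (N : ℕ) (a : ℕ → ℂ) : C(AddCircle T, ℂ) :=
  trigSum (range (N + 1)) (fun j ↦ (j : ℤ)) a

theorem harmonicSum_coe {ω : ℝ} (hω : ω = 2 * Real.pi / T) (N : ℕ) (a : ℕ → ℂ) (t : ℝ) :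
    harmonicSum N a (t : AddCircle T) = ∑ j ∈ range (N + 1), a j * exp (I * j * ω * t) := by
  simp only [harmonicSum, trigSum_apply, fourier_coe_eq_exp hω, Int.cast_natCast]

variable [Fact (0 < T)] {N m : ℕ}

theorem fourierCoeff_harmonicSum_mul_harmonicSum (hmN : m ≤ N) (a b : ℕ → ℂ) :
    fourierCoeff (harmonicSum N a * harmonicSum N b : C(AddCircle T, ℂ)) m =
      ∑ j ∈ range (m + 1), a j * b (m - j) := by
  have frequencies : {x ∈ range (N + 1) ×ˢ range (N + 1) | (x.1 + x.2 : ℤ) = m} =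
      antidiagonal m := by
    ext x
    simp only [mem_filter, mem_product, mem_range, HasAntidiagonal.mem_antidiagonal]
    omega
  rw [harmonicSum, harmonicSum, trigSum_mul_trigSum, fourierCoeff_trigSum, frequencies,
    Nat.sum_antidiagonal_eq_sum_range_succ_mk]

theorem fourierCoeff_star_harmonicSum_mul_harmonicSum (hmN : m ≤ N) (a b : ℕ → ℂ) :
    fourierCoeff (star (harmonicSum N a) * harmonicSum N b : C(AddCircle T, ℂ)) m =
      ∑ l ∈ range (N - m + 1), conj (a l) * b (l + m) := by
  have frequencies : {x ∈ range (N + 1) ×ˢ range (N + 1) | (-x.1 + x.2 : ℤ) = m} =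
      (range (N - m + 1)).image fun l ↦ (l, l + m) := by
    ext ⟨j, k⟩
    simp only [mem_filter, mem_product, mem_range, mem_image, Prod.mk.injEq]
    exact ⟨fun h ↦ ⟨j, by omega, rfl, by omega⟩, fun ⟨l, hl⟩ ↦ by omega⟩
  have shift_injective : Function.Injective fun l : ℕ ↦ (l, l + m) :=
    fun _ _ h ↦ congrArg Prod.fst h
  rw [harmonicSum, harmonicSum, star_trigSum, trigSum_mul_trigSum, fourierCoeff_trigSum,
    frequencies, sum_image shift_injective.injOn]

theorem fourierCoeff_star_harmonicSum_mul_star_harmonicSum (hm : 0 < m) (a b : ℕ → ℂ) :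
    fourierCoeff (star (harmonicSum N a) * star (harmonicSum N b) : C(AddCircle T, ℂ)) m = 0 := by
  rw [harmonicSum, harmonicSum, star_trigSum, star_trigSum, trigSum_mul_trigSum,
    fourierCoeff_trigSum, filter_false_of_mem fun x _ ↦ by omega, sum_empty]

end HarmonicSum

/-- `m`-th complex Fourier coefficient of the product of two truncated
harmonic expansions, for `1 ≤ m ≤ N`:
`(1/T) ∫₀^T u v e^{−ι m ω t} dt
 = (1/4) (∑_{j=0}^m a_j b_{m−j} + ∑_{l=0}^{N−m} (conj(a_l) b_{l+m} + a_{l+m} conj(b_l)))`. -/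
theorem stmt_10
    (T : ℝ) (hT : 0 < T) (ω : ℝ) (hω : ω = 2 * Real.pi / T)
    (N : ℕ) (a b : ℕ → ℂ)
    (u v : ℝ → ℝ)
    (hu : ∀ t : ℝ, u t =
      (∑ j ∈ range (N + 1), a j * Complex.exp (Complex.I * j * ω * t)).re)
    (hv : ∀ t : ℝ, v t =
      (∑ j ∈ range (N + 1), b j * Complex.exp (Complex.I * j * ω * t)).re) :
    ∀ m : ℕ, 1 ≤ m → m ≤ N →
      (1 / (T : ℂ)) * ∫ t in (0 : ℝ)..T,
          ((u t * v t : ℝ) : ℂ) * Complex.exp (-Complex.I * m * ω * t) =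
        (1 / 4) * ((∑ j ∈ range (m + 1), a j * b (m - j)) +
          ∑ l ∈ range (N - m + 1),
            ((starRingEnd ℂ) (a l) * b (l + m) + a (l + m) * (starRingEnd ℂ) (b l))) := by
  intro m hm hmN
  have : Fact (0 < T) := ⟨hT⟩
  have coeff_uv := fourierCoeff_eq_integral_exp hω
    (fun x ↦ (((harmonicSum N a x).re * (harmonicSum N b x).re : ℝ) : ℂ)) m
  simp only [harmonicSum_coe hω, ← hu, ← hv, Int.cast_natCast] at coeff_uv
  rw [← coeff_uv, fourierCoeff_re_mul_re, fourierCoeff_harmonicSum_mul_harmonicSum hmN,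
    fourierCoeff_star_harmonicSum_mul_harmonicSum hmN,
    fourierCoeff_star_harmonicSum_mul_harmonicSum hmN,
    fourierCoeff_star_harmonicSum_mul_star_harmonicSum hm, add_zero, add_assoc, ← sum_add_distrib]
  simp only [mul_comm (conj (b _))]
end
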